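/- Let 1 ≤ k ≤ n and let Z_1,…,Z_k be (k−1)-element subsets of {1,…,n} satisfying |⋂_{i∈I} Z_i| ≤ k − |I| for every nonempty subset I ⊆ {1,…,k}. Suppose there exists a choice (σ, (S_1,…,S_k)) whose value is unique among all choices (i.e., every choice with the same value multiset equals it, with the same permutation and the same subsets). Then for every finite field F_q with q ≥ n + k − 1 elements there exists a k×n matrix G over F_q such that G_{i,j} = 0 whenever j ∈ Z_i, and every set of k columns of G is linearly independent (so G generates an [n,k] MDS code). -/

import Mathlib

/-!
For points `x` in a commutative ring put `p_i(t) = ∏_{l ∈ Z i} (t + x_l)`, a polynomial of degree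
`k - 1`, and `G i j = p_i(-x_j)`, which vanishes for `j ∈ Z i`. Expanding `p_i` shows that `G` is
the product of the `k × k` coefficient matrix of the `p_i` (`coeffMatrix`, whose entries are
elementary symmetric polynomials in the `x_l`, `l ∈ Z i`) and a Vandermonde matrix. Hence any `k`
columns of `G` are independent as soon as the `x_j` are distinct and the coefficient matrix is
invertible.

For indeterminates `x_j = X_j`, the Leibniz expansion of the determinant of the coefficient matrix
is a signed sum over all choices `(σ, S)` of the monomial whose exponent is the value of the
choice; a choice with a unique value therefore contributes a monomial with coefficient `±1`
(`det_coeffMatrix_ne_zero`), in every characteristic. In each variable this determinant has degree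
at most `k - 1`, because the intersection hypothesis prevents a point from lying in all `Z i`
(`degreeOf_det_coeffMatrix_le`), and the Vandermonde determinant of all `X_j` has degree at most
`n - 1`. Their product is a nonzero polynomial of degree at most `n + k - 2 < q` in each variable,
so it does not vanish identically on `F^n`; a point where it is nonzero gives the code.
-/

/-- A choice for the family `Z`: a permutation `σ` of `{1,…,k}` together with subsets
`S i ⊆ Z i` of cardinality `σ(i) - 1` (here `(σ i : ℕ)`, with `0`-based indexing). -/
def IsChoice (n k : ℕ) (Z : Fin k → Finset (Fin n))
    (σ : Equiv.Perm (Fin k)) (S : Fin k → Finset (Fin n)) : Prop :=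
  ∀ i, S i ⊆ Z i ∧ (S i).card = (σ i : ℕ)

/-- The value of a choice: the multiset union `S 1 ⊎ ⋯ ⊎ S k`. -/
def choiceValue (n k : ℕ) (S : Fin k → Finset (Fin n)) : Multiset (Fin n) :=
  ∑ i : Fin k, (S i).val

open MvPolynomial

/-- The matrix whose `(i, r)` entry is the `r`-th elementary symmetric polynomial of the `x l`,
`l ∈ Z i`: the coefficient of `t ^ (k - 1 - r)` in `∏_{l ∈ Z i} (t + x l)` when `#(Z i) = k - 1`. -/
def coeffMatrix {R : Type*} [CommRing R] {n k : ℕ} (Z : Fin k → Finset (Fin n)) (x : Fin n → R) :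
    Matrix (Fin k) (Fin k) R :=
  Matrix.of fun i r => ∑ T ∈ (Z i).powersetCard (r : ℕ), ∏ j ∈ T, x j

theorem map_det_coeffMatrix {R R' : Type*} [CommRing R] [CommRing R'] {n k : ℕ}
    (Z : Fin k → Finset (Fin n)) (x : Fin n → R) (f : R →+* R') :
    f (coeffMatrix Z x).det = (coeffMatrix Z (fun j => f (x j))).det := by
  rw [RingHom.map_det]
  congr 1
  ext i r
  simp [coeffMatrix]

theorem prod_add_eq_sum_coeffMatrix {R : Type*} [CommRing R] {n k : ℕ} (hk : 1 ≤ k)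
    (Z : Fin k → Finset (Fin n)) (hZ : ∀ i, (Z i).card = k - 1) (x : Fin n → R) (i : Fin k)
    (t : R) :
    ∏ l ∈ Z i, (x l + t) = ∑ r : Fin k, coeffMatrix Z x i r * t ^ (r.rev : ℕ) := by
  rw [Finset.prod_add, Finset.sum_powerset, hZ, Nat.sub_add_cancel hk, Finset.sum_range]
  refine Finset.sum_congr rfl fun r _ => ?_
  rw [coeffMatrix, Matrix.of_apply, Finset.sum_mul]
  refine Finset.sum_congr rfl fun T hT => ?_
  rw [Finset.mem_powersetCard] at hT
  rw [Finset.prod_const, Finset.card_sdiff_of_subset hT.1, hZ, hT.2, Fin.val_rev]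
  congr 2
  omega

theorem prod_X_eq_monomial_choiceValue {F : Type*} [CommRing F] {n k : ℕ}
    (S : Fin k → Finset (Fin n)) :
    ∏ i, ∏ j ∈ S i, (X j : MvPolynomial (Fin n) F) =
      monomial (Multiset.toFinsupp (choiceValue n k S)) 1 := by
  rw [choiceValue, map_sum, monomial_sum_one]
  refine Finset.prod_congr rfl fun i _ => ?_
  have h : Multiset.toFinsupp (S i).val = ∑ j ∈ S i, Finsupp.single j 1 := by
    rw [← Finset.sum_multiset_singleton, map_sum]
    simp
  rw [h, monomial_sum_one]
  rfl

/-- The coefficient of the value of the unique choice `(σ, S)` in the determinant is `sign σ`. -/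
theorem det_coeffMatrix_ne_zero {F : Type*} [Field F] {n k : ℕ} (Z : Fin k → Finset (Fin n))
    (σ : Equiv.Perm (Fin k)) (S : Fin k → Finset (Fin n)) (hS : IsChoice n k Z σ S)
    (huniq : ∀ (σ' : Equiv.Perm (Fin k)) (S' : Fin k → Finset (Fin n)),
        IsChoice n k Z σ' S' → choiceValue n k S' = choiceValue n k S → σ' = σ ∧ S' = S) :
    (coeffMatrix Z (X : Fin n → MvPolynomial (Fin n) F)).det ≠ 0 := by
  have hmem : ∀ (τ : Equiv.Perm (Fin k)) (T : Fin k → Finset (Fin n)),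
      T ∈ Fintype.piFinset (fun i => (Z i).powersetCard (τ i : ℕ)) ↔ IsChoice n k Z τ T := by
    intro τ T
    simp [IsChoice, Fintype.mem_piFinset, Finset.mem_powersetCard]
  have hdet : (coeffMatrix Z (X : Fin n → MvPolynomial (Fin n) F)).det =
      ∑ τ : Equiv.Perm (Fin k), C ((Equiv.Perm.sign τ : ℤ) : F) *
        ∑ T ∈ Fintype.piFinset (fun i => (Z i).powersetCard (τ i : ℕ)),
          monomial (Multiset.toFinsupp (choiceValue n k T)) 1 := by
    rw [← Matrix.det_transpose, Matrix.det_apply']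
    refine Finset.sum_congr rfl fun τ _ => ?_
    simp only [← prod_X_eq_monomial_choiceValue, Matrix.transpose_apply, coeffMatrix,
      Matrix.of_apply, Finset.prod_univ_sum, map_intCast]
  have hcoeff : coeff (Multiset.toFinsupp (choiceValue n k S))
      (coeffMatrix Z (X : Fin n → MvPolynomial (Fin n) F)).det = ((Equiv.Perm.sign σ : ℤ) : F) := by
    rw [hdet, coeff_sum, Finset.sum_eq_single σ]
    · rw [coeff_C_mul, coeff_sum, Finset.sum_eq_single S]
      · simp
      · intro T hT hne
        rw [coeff_monomial, if_neg]
        intro h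
        exact hne (huniq σ T ((hmem σ T).1 hT) (Multiset.toFinsupp.injective h)).2
      · exact fun h => absurd ((hmem σ S).2 hS) h
    · intro τ _ hne
      rw [coeff_C_mul, coeff_sum, Finset.sum_eq_zero, mul_zero]
      intro T hT
      rw [coeff_monomial, if_neg]
      intro h
      exact hne (huniq τ T ((hmem τ T).1 hT) (Multiset.toFinsupp.injective h)).1
    · simp
  intro h0
  rw [h0, coeff_zero] at hcoeff
  rcases Int.units_eq_one_or (Equiv.Perm.sign σ) with h | h <;> simp [h] at hcoeff

theorem degreeOf_det_le {F : Type*} [Field F] {n k d : ℕ} (l : Fin n)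
    (M : Matrix (Fin k) (Fin k) (MvPolynomial (Fin n) F))
    (h : ∀ τ : Equiv.Perm (Fin k), ∑ i, (M i (τ i)).degreeOf l ≤ d) :
    M.det.degreeOf l ≤ d := by
  rw [← Matrix.det_transpose, Matrix.det_apply']
  refine (degreeOf_sum_le _ _ _).trans (Finset.sup_le fun τ _ => ?_)
  rw [← map_intCast (C : F →+* MvPolynomial (Fin n) F)]
  exact (degreeOf_C_mul_le _ _ _).trans ((degreeOf_prod_le _ _ _).trans (h τ))

/-- Row `i` has degree at most `1` in `X l`, and degree `0` unless `l ∈ Z i`; by the intersection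
hypothesis at most `k - 1` of the sets `Z i` contain `l`. -/
theorem degreeOf_det_coeffMatrix_le {F : Type*} [Field F] {n k : ℕ}
    (Z : Fin k → Finset (Fin n))
    (hint : ∀ I : Finset (Fin k), I.Nonempty → (I.inf Z).card ≤ k - I.card) (l : Fin n) :
    (coeffMatrix Z (X : Fin n → MvPolynomial (Fin n) F)).det.degreeOf l ≤ k - 1 := by
  have hentry : ∀ i r, (coeffMatrix Z (X : Fin n → MvPolynomial (Fin n) F) i r).degreeOf l ≤
      if l ∈ Z i then 1 else 0 := by
    intro i r
    refine (degreeOf_sum_le _ _ _).trans (Finset.sup_le fun T hT => ?_)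
    refine (degreeOf_prod_le _ _ _).trans ?_
    simp only [degreeOf_X, Finset.sum_ite_eq]
    have := (Finset.mem_powersetCard.1 hT).1
    split_ifs with h1 h2
    · exact le_rfl
    · exact absurd (this h1) h2
    · exact Nat.zero_le _
    · exact le_rfl
  refine degreeOf_det_le l _ fun τ => ?_
  refine (Finset.sum_le_sum fun i _ => hentry i (τ i)).trans ?_
  rw [← Finset.card_filter]
  set I := Finset.univ.filter fun i => l ∈ Z i with hI
  rcases I.eq_empty_or_nonempty with h | h
  · simp [h]
  · have hl : l ∈ I.inf Z := by
      rw [Finset.mem_inf]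
      intro i hi
      exact (Finset.mem_filter.1 hi).2
    have h1 := Finset.card_pos.2 ⟨l, hl⟩
    have h2 := hint I h
    omega

theorem degreeOf_det_vandermonde_le {F : Type*} [Field F] {n : ℕ} (l : Fin n) :
    (Matrix.vandermonde (X : Fin n → MvPolynomial (Fin n) F)).det.degreeOf l ≤ n - 1 := by
  refine degreeOf_det_le l _ fun τ => ?_
  rw [Finset.sum_eq_single l]
  · rw [Matrix.vandermonde_apply, degreeOf_X_self_pow]
    have := (τ l).isLt
    omega
  · intro i _ hne
    rw [Matrix.vandermonde_apply, degreeOf_X_pow_of_ne _ hne.symm]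
  · simp

/-- If the `(k-1)`-subsets `Z i` satisfy `|⋂_{i ∈ I} Z i| ≤ k - |I|` for all nonempty `I`
and some choice has a unique value, then over every finite field with at least `n + k - 1`
elements there is a `k × n` MDS generator matrix vanishing on the prescribed positions. -/
theorem mds_code_of_unique_multiset (n k : ℕ) (hk : 1 ≤ k) (hkn : k ≤ n)
    (Z : Fin k → Finset (Fin n)) (hZ : ∀ i, (Z i).card = k - 1)
    (hint : ∀ I : Finset (Fin k), I.Nonempty → (I.inf Z).card ≤ k - I.card)
    (huniq : ∃ (σ : Equiv.Perm (Fin k)) (S : Fin k → Finset (Fin n)),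
      IsChoice n k Z σ S ∧
      ∀ (σ' : Equiv.Perm (Fin k)) (S' : Fin k → Finset (Fin n)),
        IsChoice n k Z σ' S' → choiceValue n k S' = choiceValue n k S →
          σ' = σ ∧ S' = S)
    (F : Type*) [Field F] [Fintype F] (hq : n + k - 1 ≤ Fintype.card F) :
    ∃ G : Matrix (Fin k) (Fin n) F,
      (∀ i j, j ∈ Z i → G i j = 0) ∧
      (∀ s : Finset (Fin n), s.card = k →
        LinearIndependent F (fun j : s => (fun i : Fin k => G i (j : Fin n)))) := by
  obtain ⟨σ, S, hS, hu⟩ := huniq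
  set P : MvPolynomial (Fin n) F := (coeffMatrix Z X).det * (Matrix.vandermonde X).det with hP
  have hP0 : P ≠ 0 := by
    refine mul_ne_zero (det_coeffMatrix_ne_zero Z σ S hS hu) ?_
    exact Matrix.det_vandermonde_ne_zero_iff.2 (X_injective)
  obtain ⟨b, hb⟩ : ∃ b : Fin n → F, eval b P ≠ 0 := by
    by_contra! hcon
    refine hP0 (eq_zero_of_eval_zero_at_prod_finset P (fun _ => Finset.univ) (fun l => ?_)
      fun x _ => hcon x)
    have h1 := degreeOf_det_coeffMatrix_le (F := F) Z hint l
    have h2 := degreeOf_det_vandermonde_le (F := F) l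
    have h3 := degreeOf_mul_le l (coeffMatrix Z (X : Fin n → MvPolynomial (Fin n) F)).det
      (Matrix.vandermonde X).det
    rw [Finset.card_univ, hP]
    omega
  rw [hP, map_mul, map_det_coeffMatrix, RingHom.map_det] at hb
  simp only [eval_X] at hb
  have hA : (coeffMatrix Z b).det ≠ 0 := left_ne_zero_of_mul hb
  have hinj : Function.Injective b := by
    rw [← Matrix.det_vandermonde_ne_zero_iff]
    convert right_ne_zero_of_mul hb using 2
    ext i j
    simp
  refine ⟨Matrix.of fun i j => ∏ l ∈ Z i, (b l + -b j), fun i j hj => ?_, fun s hs => ?_⟩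
  · exact Finset.prod_eq_zero hj (add_neg_cancel _)
  · -- The chosen columns, listed as rows: a Vandermonde matrix times the transposed coefficients.
    let e : Fin k ≃ s := (s.orderIsoOfFin hs).toEquiv
    let V : Matrix (Fin k) (Fin k) F := Matrix.projVandermonde 1 fun a => -b (e a)
    have hV : V.det ≠ 0 := by
      rw [Matrix.det_projVandermonde]
      refine Finset.prod_ne_zero_iff.2 fun i _ => Finset.prod_ne_zero_iff.2 fun j hj => ?_
      intro h
      have hbij : b (e i) = b (e j) := by
        simp only [Pi.one_apply, one_mul] at h
        linear_combination -h
      exact (Finset.mem_Ioi.1 hj).ne (e.injective (Subtype.ext (hinj hbij)))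
    have hdet : (V * (coeffMatrix Z b).transpose).det ≠ 0 := by
      rw [Matrix.det_mul, Matrix.det_transpose]
      exact mul_ne_zero hV hA
    rw [← linearIndependent_equiv e]
    have hrows : ((fun (j : s) (i : Fin k) => Matrix.of (fun i j => ∏ l ∈ Z i, (b l + -b j)) i
        (j : Fin n)) ∘ e) = fun a => (V * (coeffMatrix Z b).transpose) a := by
      funext a i
      simp only [Function.comp_apply, Matrix.of_apply, Matrix.mul_apply, Matrix.transpose_apply]
      rw [prod_add_eq_sum_coeffMatrix hk Z hZ b i (-b (e a))]
      refine Finset.sum_congr rfl fun r _ => ?_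
      simp [V, Matrix.projVandermonde_apply, mul_comm]
    rw [hrows]
    exact Matrix.linearIndependent_rows_of_det_ne_zero hdet
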